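/- Let Y be a Banach space, (x_n)_{n∈ℕ} a bounded sequence in Y, and L ∈ Y. Let V : ℕ → (0,∞) be strictly increasing with lim_{N→∞} V(N) = ∞ and lim_{N→∞} ΔV(N)/V(N) = 0. If 𝔼^{log V}_unif x_n = L, then 𝔼(∞)^V x_n = L. -/

import Mathlib

open Filter Finset MeasureTheory

/-- Discrete derivative: `Δg(n) = g(n) - g(n-1)` for `n ≥ 2`, and `Δg(1) = g(1)`. -/
noncomputable def dd (g : ℕ → ℝ) (n : ℕ) : ℝ := if n = 1 then g 1 else g n - g (n - 1)

/-- Iterated discrete derivative `Δ^k`. -/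
noncomputable def ddIter (f : ℕ → ℝ) : ℕ → ℕ → ℝ
  | 0 => f
  | k + 1 => dd (ddIter f k)

/-- `N`-th `W`-weighted average `𝔼^W_{n ≤ N} x_n`. -/
noncomputable def wavg {Y : Type*} [AddCommGroup Y] [Module ℝ Y]
    (W : ℕ → ℝ) (x : ℕ → Y) (N : ℕ) : Y :=
  (W N)⁻¹ • ∑ n ∈ Finset.Icc 1 N, dd W n • x n

/-- `W`-weighted average over the interval `[M, N]`. -/
noncomputable def wavgI {Y : Type*} [AddCommGroup Y] [Module ℝ Y]
    (W : ℕ → ℝ) (x : ℕ → Y) (M N : ℕ) : Y :=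
  (W N - W M)⁻¹ • ∑ n ∈ Finset.Icc M N, dd W n • x n

/-- Cesàro average over the interval `[M, N]`. -/
noncomputable def cesaroI {Y : Type*} [AddCommGroup Y] [Module ℝ Y]
    (x : ℕ → Y) (M N : ℕ) : Y :=
  ((N : ℝ) - (M : ℝ))⁻¹ • ∑ n ∈ Finset.Icc M N, x n

/-- Iterated `W`-weighted averages: `iterAvg W x k N = 𝔼(k)^W_{n ≤ N} x_n`,
with the convention `iterAvg W x 0 = x`. -/
noncomputable def iterAvg {Y : Type*} [AddCommGroup Y] [Module ℝ Y]
    (W : ℕ → ℝ) (x : ℕ → Y) : ℕ → ℕ → Y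
  | 0, N => x N
  | k + 1, N => (W N)⁻¹ • ∑ n ∈ Finset.Icc 1 N, dd W n • iterAvg W x k n

/-- The uniform `W`-weighted average of `x` equals `L`: `𝔼^W_unif x_n = L`. -/
def unifAvg {Y : Type*} [NormedAddCommGroup Y] [NormedSpace ℝ Y]
    (W : ℕ → ℝ) (x : ℕ → Y) (L : Y) : Prop :=
  ∀ ε > (0 : ℝ), ∃ K > (0 : ℝ), ∀ M N : ℕ, 1 ≤ M → M ≤ N → K ≤ W N - W M →
    ‖wavgI W x M N - L‖ < ε

/-- `𝔼(∞)^W x_n = L`: `lim_{k → ∞} limsup_{N → ∞} ‖𝔼(k)^W_{n ≤ N}(x_n - L)‖ = 0`. -/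
def iterInfty {Y : Type*} [NormedAddCommGroup Y] [NormedSpace ℝ Y]
    (W : ℕ → ℝ) (x : ℕ → Y) (L : Y) : Prop :=
  Tendsto (fun k => Filter.limsup (fun N => ‖iterAvg W (fun n => x n - L) (k + 1) N‖) atTop)
    atTop (nhds 0)

/-- Membership in the class `𝓕₁`. -/
def inF1 (f : ℕ → ℝ) : Prop :=
  Tendsto f atTop atTop ∧ Tendsto (fun n => dd f n) atTop (nhds 0) ∧
    ∃ n₀ : ℕ, ∀ m n : ℕ, n₀ ≤ m → m ≤ n → dd f n ≤ dd f m

/-- `memF ℓ f` means `f ∈ 𝓕_{ℓ+1}`. -/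
def memF : ℕ → (ℕ → ℝ) → Prop
  | 0, f => inF1 f
  | ℓ + 1, f => memF ℓ (dd f)

/-- Integer powers `T^m` of an invertible map `T` with inverse `e`. -/
def zpowIter {X : Type*} (T e : X → X) (m : ℤ) : X → X :=
  if 0 ≤ m then T^[m.toNat] else e^[(-m).toNat]

/-- `p(Δ)f(n)` for an integer polynomial `p`. -/
noncomputable def polyDD (p : Polynomial ℤ) (f : ℕ → ℝ) (n : ℕ) : ℝ :=
  ∑ j ∈ Finset.range (p.natDegree + 1), (p.coeff j : ℝ) * ddIter f j n

/-- `E ⊆ ℕ = {1, 2, ...}` has positive upper Banach density. -/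
def posUBD (E : Set ℕ) : Prop :=
  ∃ δ : ℝ, 0 < δ ∧ ∃ M N : ℕ → ℕ, (∀ j, 1 ≤ M j ∧ M j ≤ N j) ∧
    Tendsto (fun j => N j - M j) atTop atTop ∧
    ∀ j, δ * ((N j : ℝ) - (M j : ℝ)) ≤ (Nat.card ↥(E ∩ Set.Icc (M j) (N j)) : ℝ)

section helpers
variable {Y : Type*} [NormedAddCommGroup Y] [NormedSpace ℝ Y]

/-- averaging operator -/
noncomputable def avgOp (Y : Type*) [NormedAddCommGroup Y] [NormedSpace ℝ Y] (U : ℕ → ℝ) :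
    Module.End ℝ (ℕ → Y) where
  toFun f N := (U N)⁻¹ • ∑ n ∈ Finset.range N, (U (n+1) - U n) • f (n+1)
  map_add' f g := by
    funext N
    simp [Finset.sum_add_distrib, smul_add]
  map_smul' c f := by
    funext N
    simp only [Pi.smul_apply, RingHom.id_apply]
    rw [smul_comm c, Finset.smul_sum (r := c)]
    congr 1
    exact Finset.sum_congr rfl fun i _ => smul_comm _ _ _

lemma avgOp_apply (U : ℕ → ℝ) (f : ℕ → Y) (N : ℕ) :
    avgOp Y U f N = (U N)⁻¹ • ∑ n ∈ Finset.range N, (U (n+1) - U n) • f (n+1) := rfl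

lemma avgOp_zero (U : ℕ → ℝ) (f : ℕ → Y) : avgOp Y U f 0 = 0 := by simp [avgOp_apply]

lemma avgOp_rec (U : ℕ → ℝ) (hp : ∀ n, 0 < U (n+1)) (h0 : U 0 = 0) (f : ℕ → Y) (N : ℕ) :
    U (N+1) • avgOp Y U f (N+1) = U N • avgOp Y U f N + (U (N+1) - U N) • f (N+1) := by
  rw [avgOp_apply, smul_inv_smul₀ (hp N).ne', Finset.sum_range_succ]
  congr 1
  cases N with
  | zero => simp [h0]
  | succ N => rw [avgOp_apply, smul_inv_smul₀ (hp N).ne']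

lemma avgOp_inv (U : ℕ → ℝ) (hp : ∀ n, 0 < U (n+1)) (h0 : U 0 = 0) (w g : ℕ → Y)
    (hw : w 0 = 0) (h : ∀ n, U n • (w (n+1) - w n) = (U (n+1) - U n) • g (n+1)) :
    avgOp Y U (w + g) = w := by
  funext N
  induction N with
  | zero => rw [avgOp_zero, hw]
  | succ N ih =>
    have := avgOp_rec U hp h0 (w + g) N
    rw [ih, Pi.add_apply, smul_add, ← h N] at this
    have h2 : U (N+1) • avgOp Y U (w+g) (N+1) = U (N+1) • w (N+1) := by
      rw [this]; module
    exact smul_right_injective Y (hp N).ne' h2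

lemma avgOp_half (U : ℕ → ℝ) (hp : ∀ n, 0 < U (n+1)) (h0 : U 0 = 0) (hm : ∀ n, U n ≤ U (n+1))
    (f : ℕ → Y) (c : ℝ) (hc : 0 ≤ c)
    (h : ∀ n, ‖((1/2 : ℝ) • (f + avgOp Y U f)) n‖ ≤ c) (n : ℕ) : ‖avgOp Y U f n‖ ≤ c := by
  induction n with
  | zero => simpa [avgOp_zero] using hc
  | succ N ih =>
    have hU : 0 ≤ U N := by
      cases N with
      | zero => exact h0.ge
      | succ N => exact (hp N).le
    have h1 := avgOp_rec U hp h0 f N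
    have h2 := h (N+1)
    simp only [Pi.smul_apply, Pi.add_apply] at h2
    set z := avgOp Y U f with hz
    have e : (2 * U (N+1) - U N) • z (N+1) =
        U N • z N + (2 * (U (N+1) - U N)) • ((1/2 : ℝ) • (f (N+1) + z (N+1))) := by
      have : (2 * U (N+1) - U N) • z (N+1) = U (N+1) • z (N+1) + (U (N+1) - U N) • z (N+1) := by
        module
      rw [this, h1]; module
    have hpos : 0 < 2 * U (N+1) - U N := by linarith [hp N, hm N]
    have hd : 0 ≤ 2 * (U (N+1) - U N) := by linarith [hm N]
    have h3 : (2 * U (N+1) - U N) * ‖z (N+1)‖ ≤ (2 * U (N+1) - U N) * c := by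
      have := congrArg norm e
      rw [norm_smul, Real.norm_of_nonneg hpos.le] at this
      rw [this]
      refine (norm_add_le _ _).trans ?_
      rw [norm_smul _ (z N), norm_smul (2 * (U (N+1) - U N)), Real.norm_of_nonneg hU, Real.norm_of_nonneg hd]
      nlinarith [mul_le_mul_of_nonneg_left ih hU, mul_le_mul_of_nonneg_left h2 hd]
    exact le_of_mul_le_mul_left h3 hpos

lemma avgOp_contr (U : ℕ → ℝ) (hp : ∀ n, 0 < U (n+1)) (h0 : U 0 = 0) (hm : ∀ n, U n ≤ U (n+1))
    (f : ℕ → Y) (c : ℝ) (hc : 0 ≤ c) (h : ∀ n, ‖f n‖ ≤ c) (n : ℕ) : ‖avgOp Y U f n‖ ≤ c := by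
  induction n with
  | zero => simpa [avgOp_zero] using hc
  | succ N ih =>
    have hU : 0 ≤ U N := by
      cases N with
      | zero => exact h0.ge
      | succ N => exact (hp N).le
    have e := avgOp_rec U hp h0 f N
    have hd : 0 ≤ (U (N+1) - U N) := by linarith [hm N]
    have h3 : (U (N+1)) * ‖avgOp Y U f (N+1)‖ ≤ (U (N+1)) * c := by
      have := congrArg norm e
      rw [norm_smul, Real.norm_of_nonneg (hp N).le] at this
      rw [this]
      refine (norm_add_le _ _).trans ?_
      rw [norm_smul, norm_smul, Real.norm_of_nonneg hU, Real.norm_of_nonneg hd]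
      nlinarith [mul_le_mul_of_nonneg_left ih hU, mul_le_mul_of_nonneg_left (h (N+1)) hd]
    exact le_of_mul_le_mul_left h3 (hp N)

lemma avgOp_pow_contr (U : ℕ → ℝ) (hp : ∀ n, 0 < U (n+1)) (h0 : U 0 = 0)
    (hm : ∀ n, U n ≤ U (n+1)) (k : ℕ)
    (f : ℕ → Y) (c : ℝ) (hc : 0 ≤ c) (h : ∀ n, ‖f n‖ ≤ c) (n : ℕ) :
    ‖(avgOp Y U ^ k) f n‖ ≤ c := by
  induction k generalizing n with
  | zero => simpa using h n
  | succ k ih => rw [pow_succ']; exact avgOp_contr U hp h0 hm _ c hc ih n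

lemma avgOp_tendsto (U : ℕ → ℝ) (hp : ∀ n, 0 < U (n+1)) (h0 : U 0 = 0)
    (hm : ∀ n, U n ≤ U (n+1)) (ht : Tendsto U atTop atTop) (f : ℕ → Y)
    (hf : Tendsto f atTop (nhds 0)) : Tendsto (avgOp Y U f) atTop (nhds 0) := by
  have hs : ∀ N, ∑ n ∈ Finset.range N, (U (n+1) - U n) = U N := fun N => by
    rw [Finset.sum_range_sub, h0, sub_zero]
  have h1 : (fun n => (U (n+1) - U n) • f (n+1)) =o[atTop] (fun n => U (n+1) - U n) := by
    have := (Asymptotics.isBigO_refl (fun n => U (n+1) - U n) atTop).smul_isLittleO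
      ((Asymptotics.isLittleO_one_iff ℝ).2 (hf.comp (tendsto_add_atTop_nat 1)))
    simpa using this
  have h2 := Asymptotics.IsLittleO.sum_range h1 (fun n => sub_nonneg.2 (hm n))
    (by simpa only [hs] using ht)
  simp only [hs] at h2
  rw [Asymptotics.isLittleO_iff] at h2
  rw [Metric.tendsto_atTop']
  intro ε hε
  obtain ⟨n, hn⟩ := eventually_atTop.1 (h2 (half_pos hε))
  refine ⟨n, fun N hN => ?_⟩
  have hUN : 0 < U N := by
    obtain ⟨m, rfl⟩ : ∃ m, N = m + 1 := ⟨N - 1, by omega⟩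
    exact hp m
  have := hn N hN.le
  rw [dist_zero_right, avgOp_apply, norm_smul, norm_inv, Real.norm_of_nonneg hUN.le]
  rw [Real.norm_of_nonneg hUN.le] at this
  rw [inv_mul_lt_iff₀ hUN]
  nlinarith

lemma avgOp_pow_tendsto (U : ℕ → ℝ) (hp : ∀ n, 0 < U (n+1)) (h0 : U 0 = 0)
    (hm : ∀ n, U n ≤ U (n+1)) (ht : Tendsto U atTop atTop) (k : ℕ) (f : ℕ → Y)
    (hf : Tendsto f atTop (nhds 0)) : Tendsto ((avgOp Y U ^ k) f) atTop (nhds 0) := by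
  induction k with
  | zero => simpa using hf
  | succ k ih => rw [pow_succ']; exact avgOp_tendsto U hp h0 hm ht _ ih

lemma avgOp_pow_half (U : ℕ → ℝ) (hp : ∀ n, 0 < U (n+1)) (h0 : U 0 = 0)
    (hm : ∀ n, U n ≤ U (n+1)) (k : ℕ) (f : ℕ → Y) (c : ℝ) (hc : 0 ≤ c)
    (h : ∀ n, ‖(((1/2 : ℝ) • (1 + avgOp Y U)) ^ k) f n‖ ≤ c) (n : ℕ) :
    ‖(avgOp Y U ^ k) f n‖ ≤ c := by
  induction k generalizing f n with
  | zero => simpa using h n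
  | succ k ih =>
    rw [pow_succ']
    refine avgOp_half U hp h0 hm _ c hc (fun m => ?_) n
    have e : (1/2 : ℝ) • ((avgOp Y U ^ k) f + avgOp Y U ((avgOp Y U ^ k) f)) =
        (avgOp Y U ^ k) (((1/2 : ℝ) • (1 + avgOp Y U)) f) := by
      have : avgOp Y U ((avgOp Y U ^ k) f) = (avgOp Y U ^ k) (avgOp Y U f) := by
        rw [← Module.End.mul_apply, ← Module.End.mul_apply, ← pow_succ, ← pow_succ']
      rw [this]; simp
    rw [e]
    refine ih _ (fun n => ?_) m
    have := h n
    rwa [pow_succ, Module.End.mul_apply] at this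

lemma binom_identity {R : Type*} [Ring R] (a : R) (k : ℕ) :
    ((k:R)+1) * ((1 + a) ^ k * (1 - a)) =
      ∑ j ∈ Finset.range (k+2), (((k+1).choose j : R) * ((k:R) + 1 - 2 * j)) * a ^ j := by
  have h1 : (1 + a) ^ (k+1) = ∑ j ∈ Finset.range (k+2), ((k+1).choose j : R) * a ^ j := by
    rw [add_comm, (Commute.one_right a).add_pow]
    exact Finset.sum_congr rfl fun j _ => by simp [(Nat.cast_commute _ (a^j)).eq]
  have h2 : ((k:R)+1) * ((1 + a) ^ k * a) =
      ∑ j ∈ Finset.range (k+2), (((k+1).choose j : R) * j) * a ^ j := by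
    rw [Finset.sum_range_succ']
    simp only [Nat.cast_zero, mul_zero, zero_mul, add_zero]
    rw [add_comm 1 a, (Commute.one_right a).add_pow, Finset.sum_mul, Finset.mul_sum]
    refine Finset.sum_congr rfl fun j _ => ?_
    have := Nat.add_one_mul_choose_eq k j
    have h : ((k:R)+1) * (k.choose j : R) = ((k+1).choose (j+1) : R) * ((j+1 : ℕ) : R) := by
      exact_mod_cast congrArg (Nat.cast (R := R)) this
    rw [← h]
    simp only [one_pow, mul_one, pow_succ]
    rw [← (Nat.cast_commute (k.choose j) (a^j)).eq]
    simp only [mul_assoc]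
  have h3 : (1 + a)^k * (1 - a) = (1+a)^(k+1) - 2 * ((1+a)^k * a) := by
    rw [pow_succ]; noncomm_ring
  rw [h3, mul_sub, h1, Finset.mul_sum, ← mul_assoc, show ((k:R)+1) * 2 = 2 * ((k:R)+1) by rw [mul_two, two_mul],
    mul_assoc, h2, Finset.mul_sum, ← Finset.sum_sub_distrib]
  refine Finset.sum_congr rfl fun j _ => ?_
  have c1 : ((k:R)+1) * ((k+1).choose j : R) = ((k+1).choose j : R) * ((k:R)+1) := by
    exact_mod_cast congrArg (Nat.cast (R := R)) (Nat.mul_comm (k+1) ((k+1).choose j))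
  have c2 : ((2:R)) * ((k+1).choose j : R) = ((k+1).choose j : R) * 2 := by
    exact_mod_cast congrArg (Nat.cast (R := R)) (Nat.mul_comm 2 ((k+1).choose j))
  rw [← mul_assoc, c1, mul_sub, sub_mul, ← mul_assoc, ← mul_assoc, ← mul_assoc, c2]

lemma binom_var (n : ℕ) :
    ∑ j ∈ Finset.range (n+1), ((n.choose j : ℝ)) * ((n:ℝ) - 2 * j)^2 = (2:ℝ)^n * (n:ℝ) := by
  have h := congrArg (Polynomial.eval (1/2 : ℝ)) (bernsteinPolynomial.variance ℝ n)
  simp only [Polynomial.eval_finsetSum, bernsteinPolynomial, Polynomial.eval_mul,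
    Polynomial.eval_pow, Polynomial.eval_sub, Polynomial.eval_natCast, Polynomial.eval_X,
    Polynomial.eval_one, nsmul_eq_mul] at h
  have h2 : ∀ j ∈ Finset.range (n+1), ((n.choose j : ℝ)) * ((n:ℝ) - 2 * j)^2 =
      (4 * 2^n) * (((n:ℝ) * (1/2) - j)^2 * ((n.choose j : ℝ) * (1/2)^j * (1 - 1/2)^(n-j))) := by
    intro j hj
    have : (1/2:ℝ)^j * (1-1/2)^(n-j) = (1/2)^n := by
      norm_num only
      rw [← pow_add]; congr 1
      have := Finset.mem_range.1 hj; omega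
    rw [mul_assoc (n.choose j : ℝ), this, one_div, inv_pow]
    field_simp
    ring
  rw [Finset.sum_congr rfl h2, ← Finset.mul_sum, h]
  ring

lemma binom_abs (n : ℕ) (hn : 0 < n) :
    ∑ j ∈ Finset.range (n+1), ((n.choose j : ℝ)) * |(n:ℝ) - 2 * j| ≤ 2^n * Real.sqrt n := by
  have hs : 0 < Real.sqrt n := Real.sqrt_pos.2 (by exact_mod_cast hn)
  have hss : Real.sqrt n * Real.sqrt n = n := Real.mul_self_sqrt (by positivity)
  have h1 : ∑ j ∈ Finset.range (n+1), ((n.choose j : ℝ)) * |(n:ℝ) - 2 * j| ≤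
      ∑ j ∈ Finset.range (n+1), ((n.choose j : ℝ) * ((n:ℝ) - 2 * j)^2 * (1/(2 * Real.sqrt n))
        + (n.choose j : ℝ) * (Real.sqrt n / 2)) := by
    refine Finset.sum_le_sum fun j _ => ?_
    rw [mul_assoc, ← mul_add]
    refine mul_le_mul_of_nonneg_left ?_ (by positivity)
    rw [← sq_abs ((n:ℝ) - 2 * j)]
    set d := |(n:ℝ) - 2 * j|
    have : d^2 * (1/(2 * Real.sqrt n)) + Real.sqrt n / 2 - d = (d - Real.sqrt n)^2 / (2 * Real.sqrt n) := by
      field_simp; ring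
    have h4 : 0 ≤ (d - Real.sqrt n)^2 / (2 * Real.sqrt n) := by positivity
    linarith
  refine h1.trans (le_of_eq ?_)
  rw [Finset.sum_add_distrib, ← Finset.sum_mul, ← Finset.sum_mul, binom_var]
  have : ∑ j ∈ Finset.range (n+1), (n.choose j : ℝ) = 2^n := by
    exact_mod_cast Nat.sum_range_choose n
  rw [this]
  field_simp
  nlinarith

lemma half_pow_bound (U : ℕ → ℝ) (hp : ∀ n, 0 < U (n+1)) (h0 : U 0 = 0)
    (hm : ∀ n, U n ≤ U (n+1)) (k : ℕ) (w : ℕ → Y) (c : ℝ) (hc : 0 ≤ c)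
    (h : ∀ n, ‖w n‖ ≤ c) (n : ℕ) :
    ‖(avgOp Y U ^ k) (w - avgOp Y U w) n‖ ≤ 2 * c / Real.sqrt (k+1) := by
  refine avgOp_pow_half U hp h0 hm k _ _ (by positivity) (fun n => ?_) n
  have hid := binom_identity (avgOp Y U) k
  have h1 : ((k:ℝ)+1) • ((1 + avgOp Y U) ^ k) (w - avgOp Y U w) =
      ∑ j ∈ Finset.range (k+2), (((k+1).choose j : ℝ) * ((k:ℝ) + 1 - 2 * j)) •
        (avgOp Y U ^ j) w := by
    have h2 := congrArg (fun T : Module.End ℝ (ℕ → Y) => T w) hid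
    have e1 : ((k:Module.End ℝ (ℕ → Y))+1) = algebraMap ℝ _ ((k:ℝ)+1) := by simp
    have e2 : ∀ j : ℕ, (((k+1).choose j : Module.End ℝ (ℕ → Y)) *
        ((k:Module.End ℝ (ℕ → Y)) + 1 - 2 * j)) =
        algebraMap ℝ _ (((k+1).choose j : ℝ) * ((k:ℝ) + 1 - 2 * j)) := by
      intro j
      have e3 : algebraMap ℝ (Module.End ℝ (ℕ → Y)) 2 = 2 := map_ofNat _ 2
      simp [e3]
    simp only [e2] at h2
    rw [e1] at h2
    simp only [Module.End.mul_apply, Module.algebraMap_end_apply, LinearMap.sum_apply,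
      LinearMap.sub_apply, Module.End.one_apply] at h2
    exact h2
  have h3 : ‖((k:ℝ)+1) • ((1 + avgOp Y U) ^ k) (w - avgOp Y U w) n‖ ≤
      2^(k+1) * Real.sqrt (k+1) * c := by
    have := congrFun h1 n
    rw [Pi.smul_apply] at this
    rw [this, Finset.sum_apply]
    refine (norm_sum_le _ _).trans ?_
    have hb := binom_abs (k+1) (by omega)
    push_cast at hb
    refine le_trans ?_ (mul_le_mul_of_nonneg_right hb hc)
    rw [Finset.sum_mul]
    refine Finset.sum_le_sum fun j _ => ?_
    rw [Pi.smul_apply, norm_smul, norm_mul, Real.norm_natCast, Real.norm_eq_abs]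
    exact mul_le_mul_of_nonneg_left (avgOp_pow_contr U hp h0 hm j w c hc h n) (by positivity)
  rw [smul_pow, LinearMap.smul_apply, Pi.smul_apply, norm_smul]
  rw [norm_smul, Real.norm_of_nonneg (by positivity)] at h3
  set a := ‖((1 + avgOp Y U) ^ k) (w - avgOp Y U w) n‖
  have hs : 0 < Real.sqrt ((k:ℝ)+1) := Real.sqrt_pos.2 (by positivity)
  have hss : Real.sqrt ((k:ℝ)+1) * Real.sqrt ((k:ℝ)+1) = k+1 := Real.mul_self_sqrt (by positivity)
  rw [Real.norm_of_nonneg (by positivity), one_div, inv_pow, le_div_iff₀ hs, mul_assoc,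
    inv_mul_le_iff₀ (by positivity)]
  have h3 : Real.sqrt ((k:ℝ)+1) * Real.sqrt ((k:ℝ)+1) * a ≤ 2^(k+1) * Real.sqrt (k+1) * c := by
    rw [hss]; exact h3
  have : Real.sqrt ((k:ℝ)+1) * (a * Real.sqrt ((k:ℝ)+1)) ≤ Real.sqrt ((k:ℝ)+1) * (2^k * (2*c)) := by
    rw [pow_succ] at h3; linarith
  exact le_of_mul_le_mul_left this hs

/-- Bound on the resolvent -/
lemma resolvent_bound (q : ℕ → ℝ) (y w : ℕ → Y) (n0 : ℕ) (ε δ : ℝ) (hδ : 0 < δ) (hε : 0 ≤ ε)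
    (hq : ∀ n, n0 ≤ n → 0 ≤ q n)
    (hw0 : w n0 = 0)
    (hw : ∀ n, n0 ≤ n → w (n+1) = (1 + δ * q n)⁻¹ • (w n + q n • y n)) (j : ℕ) :
    ∀ (b : Y) (c : ℝ), (∀ m, n0 ≤ m → m ≤ n0 + j →
      ‖b + ∑ n ∈ Finset.Ico m (n0+j), q n • y n‖ ≤ ε * ∑ n ∈ Finset.Ico m (n0+j), q n + c) →
      ‖b + w (n0+j)‖ ≤ c + ε / δ := by
  induction j with
  | zero =>
    intro b c h
    have := h n0 le_rfl le_rfl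
    simp at this
    have h2 : 0 ≤ ε / δ := by positivity
    simp [hw0]; linarith
  | succ j ih =>
    intro b c h
    have hqj := hq (n0+j) (by omega)
    set Q := q (n0+j) with hQ
    have hθ : 0 < 1 + δ * Q := by positivity
    have hbc : ‖b‖ ≤ c := by
      have := h (n0+(j+1)) (by omega) le_rfl
      simpa using this
    have h1 := ih (b + Q • y (n0+j)) (c + ε * Q) (fun m hm1 hm2 => by
      have := h m hm1 (by omega)
      rw [← add_assoc n0 j 1, Finset.sum_Ico_succ_top hm2, Finset.sum_Ico_succ_top hm2] at this
      have e1 : b + Q • y (n0+j) + ∑ n ∈ Finset.Ico m (n0+j), q n • y n =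
          b + (∑ k ∈ Finset.Ico m (n0 + j), q k • y k + q (n0 + j) • y (n0 + j)) := by
        rw [add_assoc, add_comm (Q • _)]
      rw [e1]
      refine this.trans (le_of_eq ?_)
      rw [hQ]; ring)
    have e : (1 + δ * Q) • (b + w (n0+(j+1))) =
        (b + Q • y (n0+j) + w (n0+j)) + (δ * Q) • b := by
      rw [← add_assoc n0 j 1, hw _ (by omega), smul_add, smul_inv_smul₀ hθ.ne']
      module
    have h2 := congrArg norm e
    rw [norm_smul, Real.norm_of_nonneg hθ.le] at h2
    have h3 : (1 + δ * Q) * ‖b + w (n0+(j+1))‖ ≤ (1 + δ * Q) * (c + ε/δ) := by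
      rw [h2]
      refine (norm_add_le _ _).trans ?_
      rw [norm_smul, Real.norm_of_nonneg (by positivity)]
      have h4 : δ * Q * ‖b‖ ≤ δ * Q * c := mul_le_mul_of_nonneg_left hbc (by positivity)
      have h5 : (1 + δ * Q) * (c + ε/δ) = c + ε * Q + ε / δ + δ * Q * c := by
        field_simp; ring
      linarith
    exact le_of_mul_le_mul_left h3 hθ

end helpers

section window
variable {Y : Type*} [NormedAddCommGroup Y] [NormedSpace ℝ Y]

lemma q_log_facts (a b ε : ℝ) (ha : 0 < a) (hab : a ≤ b) (hε : 0 ≤ ε) (hε1 : ε ≤ 1)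
    (h : b - a ≤ ε / 2 * b) :
    0 ≤ Real.log b - Real.log a ∧ Real.log b - Real.log a ≤ (b - a) / a ∧
    (b - a) / a - (Real.log b - Real.log a) ≤ ε * ((b - a) / a) ∧ (b - a) / a ≤ ε := by
  have hb : 0 < b := lt_of_lt_of_le ha hab
  have hr : 0 < b / a := by positivity
  rw [← Real.log_div hb.ne' ha.ne']
  have hq : (b - a)/a = b / a - 1 := by field_simp
  have h1 : 1 ≤ b / a := by rw [le_div_iff₀ ha]; linarith
  have h2 := Real.one_sub_inv_le_log_of_pos hr
  have h3 := Real.log_le_sub_one_of_pos hr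
  have h4 : (b - a) / a ≤ ε := by
    rw [div_le_iff₀ ha]; nlinarith
  have h5 : 1 - (b/a)⁻¹ ≥ (b/a - 1) * (1 - ε) := by
    set r := b / a
    rw [hq] at h4
    have h6 : r⁻¹ * r = 1 := inv_mul_cancel₀ hr.ne'
    have h7 : 0 < r⁻¹ := by positivity
    have h8 : 1 - r⁻¹ = (r - 1) * r⁻¹ := by linarith
    rw [h8]
    refine mul_le_mul_of_nonneg_left ?_ (by linarith)
    nlinarith
  refine ⟨Real.log_nonneg h1, by rw [hq]; exact h3, ?_, h4⟩
  rw [hq]; linarith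

lemma sum_Icc_dd (W : ℕ → ℝ) (x : ℕ → Y) (M N : ℕ) (hM : 1 ≤ M) (h : M ≤ N) :
    ∑ n ∈ Finset.Icc M N, dd W n • x n =
      dd W M • x M + ∑ n ∈ Finset.Ico M N, (W (n+1) - W n) • x (n+1) := by
  induction N, h using Nat.le_induction with
  | base => simp
  | succ N hN ih =>
    rw [Finset.sum_Icc_succ_top (by omega), ih, Finset.sum_Ico_succ_top hN, add_assoc]
    congr 2
    have : dd W (N+1) = W (N+1) - W N := by
      rw [dd, if_neg (by omega)]; simp
    rw [this]

lemma window (x : ℕ → Y) (C : ℝ) (hx : ∀ n, ‖x n‖ ≤ C) (L : Y)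
    (V : ℕ → ℝ)
    (hVpos : ∀ n : ℕ, 1 ≤ n → 0 < V n)
    (hVmono : ∀ m n : ℕ, 1 ≤ m → m < n → V m < V n)
    (hV0 : Tendsto (fun N : ℕ => dd V N / V N) atTop (nhds 0))
    (h : unifAvg (fun j => Real.log (V j)) x L) (e : ℝ) (he : 0 < e) :
    ∃ n0 : ℕ, ∃ C0 : ℝ, 1 ≤ n0 ∧ 0 ≤ C0 ∧ ∀ M N, n0 ≤ M → M ≤ N →
      ‖∑ n ∈ Finset.Ico M N, ((V (n+1) - V n) / V n) • (x (n+1) - L)‖ ≤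
        e * ∑ n ∈ Finset.Ico M N, ((V (n+1) - V n) / V n) + C0 := by
  have hC : 0 ≤ C := (norm_nonneg _).trans (hx 0)
  set D := C + ‖L‖ with hD
  have hD0 : 0 ≤ D := by positivity
  have hy : ∀ n, ‖x n - L‖ ≤ D := fun n => (norm_sub_le _ _).trans (by linarith [hx n])
  set ε := min 1 (e / (1 + D)) with hεd
  have hε : 0 < ε := by positivity
  have hε1 : ε ≤ 1 := min_le_left _ _
  have hεe : ε * (1 + D) ≤ e := by
    rw [← le_div_iff₀ (by positivity)]; exact min_le_right _ _
  obtain ⟨K, hK, hKw⟩ := h ε hε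
  have hev : ∀ᶠ N : ℕ in atTop, dd V N / V N < ε / 2 :=
    hV0.eventually_lt_const (by positivity)
  obtain ⟨m0, hm0⟩ := eventually_atTop.1 hev
  have facts : ∀ n, m0 + 1 ≤ n → 0 ≤ Real.log (V (n+1)) - Real.log (V n) ∧
      Real.log (V (n+1)) - Real.log (V n) ≤ (V (n+1) - V n) / V n ∧
      (V (n+1) - V n) / V n - (Real.log (V (n+1)) - Real.log (V n)) ≤
        ε * ((V (n+1) - V n) / V n) ∧ (V (n+1) - V n) / V n ≤ ε := by
    intro n hn
    refine q_log_facts _ _ ε (hVpos n (by omega)) (hVmono n (n+1) (by omega) (by omega)).le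
      hε.le hε1 ?_
    have h1 := hm0 (n+1) (by omega)
    rw [div_lt_iff₀ (hVpos _ (by omega)), dd, if_neg (by omega)] at h1
    simpa using h1.le
  refine ⟨m0 + 2, C + K * D, by omega, by positivity, fun M N hM hMN => ?_⟩
  set q : ℕ → ℝ := fun n => (V (n+1) - V n) / V n with hq
  set W : ℕ → ℝ := fun j => Real.log (V j) with hW
  set l : ℕ → ℝ := fun n => W (n+1) - W n with hl
  have hsl : ∑ n ∈ Finset.Ico M N, l n = W N - W M := Finset.sum_Ico_sub W hMN
  have hmem : ∀ n ∈ Finset.Ico M N, m0 + 1 ≤ n := fun n hn => by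
    have := (Finset.mem_Ico.1 hn).1; omega
  have hlq : ∑ n ∈ Finset.Ico M N, l n ≤ ∑ n ∈ Finset.Ico M N, q n :=
    Finset.sum_le_sum fun n hn => (facts n (hmem n hn)).2.1
  have hl0 : 0 ≤ ∑ n ∈ Finset.Ico M N, l n :=
    Finset.sum_nonneg fun n hn => (facts n (hmem n hn)).1
  have main : ‖∑ n ∈ Finset.Ico M N, l n • (x (n+1) - L)‖ ≤
      ε * ∑ n ∈ Finset.Ico M N, l n + (C + K * D) := by
    by_cases hc : K ≤ W N - W M
    · have h1 := hKw M N (by omega) hMN hc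
      have hp : 0 < W N - W M := lt_of_lt_of_le hK hc
      rw [wavgI, sum_Icc_dd W x M N (by omega) hMN] at h1
      have hdd : ‖dd W M • x M‖ ≤ C := by
        obtain ⟨m, rfl⟩ : ∃ m, M = m + 1 := ⟨M - 1, by omega⟩
        have hf := facts m (by omega)
        have : dd W (m+1) = W (m+1) - W m := by
          rw [dd, if_neg (by omega)]; simp
        rw [this, norm_smul, Real.norm_of_nonneg hf.1]
        have : W (m+1) - W m ≤ 1 := by linarith [hf.2.1, hf.2.2.2]
        calc _ ≤ 1 * C := mul_le_mul this (hx _) (norm_nonneg _) zero_le_one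
          _ = C := one_mul C
      have e1 : ∑ n ∈ Finset.Ico M N, l n • (x (n+1) - L) =
          (W N - W M) • ((W N - W M)⁻¹ • (dd W M • x M +
            ∑ n ∈ Finset.Ico M N, (W (n+1) - W n) • x (n+1)) - L) - dd W M • x M := by
        simp only [smul_sub, Finset.sum_sub_distrib]
        rw [smul_inv_smul₀ hp.ne', ← Finset.sum_smul, hsl]
        abel
      rw [e1, hsl]
      refine (norm_sub_le _ _).trans ?_
      rw [norm_smul, Real.norm_of_nonneg hp.le]
      have : 0 ≤ K * D := by positivity
      nlinarith [mul_le_mul_of_nonneg_left h1.le hp.le]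
    · push Not at hc
      refine (norm_sum_le _ _).trans ?_
      have : ∑ n ∈ Finset.Ico M N, ‖l n • (x (n+1) - L)‖ ≤ ∑ n ∈ Finset.Ico M N, l n * D := by
        refine Finset.sum_le_sum fun n hn => ?_
        rw [norm_smul, Real.norm_of_nonneg (facts n (hmem n hn)).1]
        exact mul_le_mul_of_nonneg_left (hy _) (facts n (hmem n hn)).1
      rw [← Finset.sum_mul] at this
      rw [← hsl] at hc
      have h2 : (∑ n ∈ Finset.Ico M N, l n) * D ≤ K * D := mul_le_mul_of_nonneg_right hc.le hD0
      have h3 : 0 ≤ ε * ∑ n ∈ Finset.Ico M N, l n := by positivity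
      linarith
  have diff : ‖∑ n ∈ Finset.Ico M N, (q n - l n) • (x (n+1) - L)‖ ≤
      ε * D * ∑ n ∈ Finset.Ico M N, q n := by
    refine (norm_sum_le _ _).trans ?_
    rw [Finset.mul_sum]
    refine Finset.sum_le_sum fun n hn => ?_
    have hf := facts n (hmem n hn)
    have hnn : 0 ≤ q n - l n := sub_nonneg.2 hf.2.1
    rw [norm_smul, Real.norm_of_nonneg hnn]
    calc _ ≤ (ε * q n) * D := mul_le_mul hf.2.2.1 (hy _) (norm_nonneg _) (hnn.trans hf.2.2.1)
      _ = _ := by ring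
  have e2 : ∑ n ∈ Finset.Ico M N, q n • (x (n+1) - L) =
      ∑ n ∈ Finset.Ico M N, l n • (x (n+1) - L) +
      ∑ n ∈ Finset.Ico M N, (q n - l n) • (x (n+1) - L) := by
    rw [← Finset.sum_add_distrib]
    exact Finset.sum_congr rfl fun n _ => by rw [← add_smul]; congr 1; ring
  change ‖∑ n ∈ Finset.Ico M N, q n • (x (n+1) - L)‖ ≤ e * ∑ n ∈ Finset.Ico M N, q n + _
  rw [e2]
  refine (norm_add_le _ _).trans ?_
  have hQ : 0 ≤ ∑ n ∈ Finset.Ico M N, q n := hl0.trans hlq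
  nlinarith [mul_le_mul_of_nonneg_left hlq hε.le, mul_le_mul_of_nonneg_right hεe hQ]

lemma iterAvg_eq (V U : ℕ → ℝ) (h0 : U 0 = 0) (hU : ∀ n, U (n+1) = V (n+1)) (x : ℕ → Y) (k : ℕ) :
    iterAvg V x k = (avgOp Y U ^ k) x := by
  induction k with
  | zero => funext N; simp [iterAvg]
  | succ k ih =>
    funext N
    rw [pow_succ', Module.End.mul_apply, ← ih, iterAvg, avgOp_apply]
    cases N with
    | zero => simp
    | succ N =>
      rw [hU N]
      congr 1
      have hI : Finset.Icc 1 (N+1) = Finset.Ico (0+1) (N+1+1) := by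
        ext a; simp only [Finset.mem_Icc, Finset.mem_Ico]; omega
      rw [Finset.range_eq_Ico, hI,
        ← Finset.sum_Ico_add' (fun n => dd V n • iterAvg V x k n) 0 (N+1) 1]
      refine Finset.sum_congr rfl fun n _ => ?_
      congr 1
      cases n with
      | zero => simp [dd, h0, hU]
      | succ n => simp [dd, hU]

end window

/-- if `𝔼^{log V}_unif x_n = L` then `𝔼(∞)^V x_n = L`. -/
theorem stmt9 {Y : Type*} [NormedAddCommGroup Y] [NormedSpace ℝ Y] [CompleteSpace Y]
    (x : ℕ → Y) (hx : ∃ C : ℝ, ∀ n, ‖x n‖ ≤ C) (L : Y)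
    (V : ℕ → ℝ)
    (hVpos : ∀ n : ℕ, 1 ≤ n → 0 < V n)
    (hVmono : ∀ m n : ℕ, 1 ≤ m → m < n → V m < V n)
    (hVtop : Tendsto V atTop atTop)
    (hV0 : Tendsto (fun N : ℕ => dd V N / V N) atTop (nhds 0))
    (h : unifAvg (fun j => Real.log (V j)) x L) :
    iterInfty V x L := by
  obtain ⟨C, hC⟩ := hx
  have hC0 : 0 ≤ C := (norm_nonneg _).trans (hC 0)
  set D := C + ‖L‖ with hD
  have hD0 : 0 ≤ D := by positivity
  set y : ℕ → Y := fun n => x n - L with hydef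
  have hy : ∀ n, ‖y n‖ ≤ D := fun n => (norm_sub_le _ _).trans (by linarith [hC n])
  set U : ℕ → ℝ := fun n => if n = 0 then 0 else V n with hUdef
  have h0 : U 0 = 0 := by simp [hUdef]
  have hU : ∀ n, U (n+1) = V (n+1) := fun n => by simp [hUdef]
  have hU' : ∀ n, 1 ≤ n → U n = V n := fun n hn => by
    simp only [hUdef]; rw [if_neg (by omega)]
  have hp : ∀ n, 0 < U (n+1) := fun n => by rw [hU]; exact hVpos _ (by omega)
  have hm : ∀ n, U n ≤ U (n+1) := fun n => by
    cases n with
    | zero => rw [h0]; exact (hp 0).le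
    | succ n => rw [hU, hU]; exact (hVmono _ _ (by omega) (by omega)).le
  have ht : Tendsto U atTop atTop := by
    refine hVtop.congr' ?_
    filter_upwards [eventually_ge_atTop 1] with n hn
    exact (hU' n hn).symm
  have key : ∀ e > 0, ∃ B : ℝ, 0 ≤ B ∧ ∀ k : ℕ, ∀ᶠ N in atTop,
      ‖(avgOp Y U ^ (k+1)) y N‖ ≤ 3 * e + 2 * B / Real.sqrt (k+1) := by
    intro e he
    obtain ⟨n0, C0, hn0, hC0', hwin⟩ := window x C hC L V hVpos hVmono hV0 h e he
    set q : ℕ → ℝ := fun n => (V (n+1) - V n) / V n with hq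
    have hqn : ∀ n, n0 ≤ n → 0 ≤ q n := fun n hn =>
      div_nonneg (sub_nonneg.2 (hVmono _ _ (by omega) (by omega)).le) (hVpos _ (by omega)).le
    set δ : ℝ := e / (C0 + 1) with hδd
    have hδ : 0 < δ := by positivity
    have hδC : δ * (C0 + 1) = e := by rw [hδd]; field_simp
    let w : ℕ → Y := fun n => Nat.rec (motive := fun _ => Y) 0
      (fun n v => if n < n0 then 0 else (1 + δ * q n)⁻¹ • (v + q n • y (n+1))) n
    have hws : ∀ n, w (n+1) = if n < n0 then 0 else (1 + δ * q n)⁻¹ • (w n + q n • y (n+1)) :=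
      fun n => rfl
    have hwz : ∀ n, n ≤ n0 → w n = 0 := by
      intro n hn
      cases n with
      | zero => rfl
      | succ n => rw [hws, if_pos (by omega)]
    have hwb : ∀ n, ‖w n‖ ≤ C0 + e / δ := by
      intro n
      by_cases hn : n ≤ n0
      · rw [hwz n hn, norm_zero]; positivity
      · obtain ⟨j, rfl⟩ : ∃ j, n = n0 + j := ⟨n - n0, by omega⟩
        have := resolvent_bound q (fun n => y (n+1)) w n0 e δ hδ he.le hqn (hwz n0 le_rfl)
          (fun n hn => by rw [hws, if_neg (by omega)]) j 0 C0 (fun m hm1 hm2 => by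
            rw [zero_add]; exact hwin m (n0+j) hm1 hm2)
        simpa using this
    have hB : δ * (C0 + e / δ) ≤ 2 * e := by
      have : δ * (e / δ) = e := by field_simp
      nlinarith
    set B := C0 + e / δ with hBd
    have hB0 : 0 ≤ B := by positivity
    refine ⟨B, hB0, fun k => ?_⟩
    set y' : ℕ → Y := fun n => if n ≤ n0 then 0 else y n with hy'
    set g : ℕ → Y := y' - δ • w with hg
    have hAg : avgOp Y U (w + g) = w := by
      refine avgOp_inv U hp h0 w g (hwz 0 (by omega)) (fun n => ?_)
      by_cases hn : n < n0
      · have e1 : w (n+1) = 0 := hwz (n+1) (by omega)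
        have e2 : w n = 0 := hwz n (by omega)
        have e3 : g (n+1) = 0 := by
          simp only [hg, hy', Pi.sub_apply, Pi.smul_apply, e1]
          rw [if_pos (by omega)]; simp
        rw [e1, e2, e3]; simp
      · have hVn := hVpos n (by omega)
        have hqn' := hqn n (by omega)
        have hne : 0 < 1 + δ * q n := by positivity
        have e1 : (1 + δ * q n) • w (n+1) = w n + q n • y (n+1) := by
          rw [hws, if_neg hn, smul_inv_smul₀ hne.ne']
        have e2 : g (n+1) = y (n+1) - δ • w (n+1) := by
          simp only [hg, hy', Pi.sub_apply, Pi.smul_apply]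
          rw [if_neg (by omega)]
        have e3 : w (n+1) - w n = q n • (y (n+1) - δ • w (n+1)) := by
          have : w (n+1) - w n = (1 + δ * q n) • w (n+1) - w n - (δ * q n) • w (n+1) := by
            module
          rw [this, e1]; module
        rw [e2, e3, hU, hU' n (by omega), smul_smul]
        congr 1
        simp only [hq]; field_simp
    have hAg' : avgOp Y U g = w - avgOp Y U w := by
      rw [map_add] at hAg
      rw [eq_sub_iff_add_eq, add_comm]; exact hAg
    have hdec : y = (y - y') + (δ • w + g) := by rw [hg]; abel
    have htend : Tendsto (y - y') atTop (nhds 0) := by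
      refine tendsto_const_nhds.congr' ?_
      filter_upwards [eventually_gt_atTop n0] with n hn
      simp only [Pi.sub_apply, hy']
      rw [if_neg (by omega), sub_self]
    have ht2 := avgOp_pow_tendsto U hp h0 hm ht (k+1) _ htend
    have ht3 : ∀ᶠ N in atTop, ‖(avgOp Y U ^ (k+1)) (y - y') N‖ < e := by
      have := ht2.norm
      rw [norm_zero] at this
      exact this.eventually_lt_const he
    filter_upwards [ht3] with N hN
    have b2 := avgOp_pow_contr U hp h0 hm (k+1) (δ • w) (2 * e) (by positivity) (fun n => by
      rw [Pi.smul_apply, norm_smul, Real.norm_of_nonneg hδ.le]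
      exact (mul_le_mul_of_nonneg_left (hwb n) hδ.le).trans hB) N
    have b3 := half_pow_bound U hp h0 hm k w B hB0 hwb N
    have e4 : (avgOp Y U ^ (k+1)) y N = (avgOp Y U ^ (k+1)) (y - y') N +
        ((avgOp Y U ^ (k+1)) (δ • w) N + (avgOp Y U ^ k) (w - avgOp Y U w) N) := by
      conv_lhs => rw [hdec]
      rw [map_add, map_add, pow_succ _ k, Module.End.mul_apply _ _ g, hAg']
      rfl
    rw [e4]
    refine (norm_add_le _ _).trans ?_
    have := norm_add_le ((avgOp Y U ^ (k+1)) (δ • w) N) ((avgOp Y U ^ k) (w - avgOp Y U w) N)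
    linarith
  have hbd : ∀ k N, ‖iterAvg V y (k+1) N‖ ≤ D := fun k N => by
    rw [iterAvg_eq V U h0 hU]
    exact avgOp_pow_contr U hp h0 hm (k+1) y D hD0 hy N
  have hub : ∀ k, IsBoundedUnder (· ≤ ·) atTop (fun N => ‖iterAvg V y (k+1) N‖) := fun k =>
    isBoundedUnder_of ⟨D, hbd k⟩
  have hcb : ∀ k, IsCoboundedUnder (· ≤ ·) atTop (fun N => ‖iterAvg V y (k+1) N‖) := fun k =>
    (isBoundedUnder_of ⟨0, fun N => norm_nonneg _⟩ :
      IsBoundedUnder (· ≥ ·) atTop (fun N => ‖iterAvg V y (k+1) N‖)).isCoboundedUnder_le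
  unfold iterInfty
  rw [Metric.tendsto_atTop]
  intro r hr
  obtain ⟨B, hB0, hB⟩ := key (r / 6) (by positivity)
  have hlim : Tendsto (fun k : ℕ => 2 * B / Real.sqrt ((k:ℝ)+1)) atTop (nhds 0) := by
    refine Tendsto.div_atTop tendsto_const_nhds ?_
    exact Real.tendsto_sqrt_atTop.comp
      (tendsto_atTop_add_const_right _ _ tendsto_natCast_atTop_atTop)
  obtain ⟨k0, hk0⟩ := eventually_atTop.1 (hlim.eventually_lt_const (half_pos hr))
  refine ⟨k0, fun k hk => ?_⟩
  have h1 : limsup (fun N => ‖iterAvg V y (k+1) N‖) atTop ≤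
      3 * (r / 6) + 2 * B / Real.sqrt (k+1) := by
    refine limsup_le_of_le (hcb k) ?_
    rw [iterAvg_eq V U h0 hU]
    exact hB k
  have h2 : 0 ≤ limsup (fun N => ‖iterAvg V y (k+1) N‖) atTop :=
    le_limsup_of_frequently_le (Frequently.of_forall fun N => norm_nonneg _) (hub k)
  have h3 := hk0 k hk
  rw [Real.dist_eq, sub_zero, abs_of_nonneg h2]
  linarith
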